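/- (The generalized Poisson system (11) is a prolongation of the first-order system (8).) Let X^i_α : ℝ^p × ℝ^n → ℝ be smooth. If a smooth map x : ℝ^p → ℝ^n satisfies x^i_α(t) = X^i_α(t, x(t)) for all t, i, α, then for all t and all i it satisfies h^{αβ} x^i_{αβ} = g^{ih} h^{αβ} g_{kj} (∇_h X^k_α) X^j_β + h^{αβ} F_j{}^i{}_α x^j_β + h^{αβ} D_β X^i_α, where all quantities depending on (t,x) are evaluated at (t, x(t)). -/

import Mathlib

/-!
Differentiating `x^i_α = X^i_α(t, x(t))` in `t^β` by the chain rule and inserting the Christoffel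
terms gives `x^i_{βα} = D_β X^i_α + (∇_j X^i_α) X^j_β`. Since `h^{αβ}` is symmetric, contracting
with it does not distinguish `x^i_{βα}` from `x^i_{αβ}`. It remains to split
`(∇_j X^i_α) X^j_β = F_j{}^i{}_α X^j_β + g^{ih} g_{kj} (∇_h X^k_α) X^j_β`, which is the definition
of `F`.
-/

open scoped BigOperators

noncomputable section

/-- Partial derivative of `f : ℝ^m → ℝ` at `t` in the `α`-th coordinate direction. -/
def pd {m : ℕ} (α : Fin m) (f : (Fin m → ℝ) → ℝ) (t : Fin m → ℝ) : ℝ :=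
  fderiv ℝ f t (Pi.single α 1)

/-- Componentwise inverse of a square array of reals (matrix inversion). -/
def minv {m : ℕ} (A : Fin m → Fin m → ℝ) : Fin m → Fin m → ℝ :=
  fun i j => (Matrix.of A)⁻¹ i j

/-- `√|det h(t)|`, the volume density of the metric `h`. -/
def sqrtDet {p : ℕ} (h : (Fin p → ℝ) → Fin p → Fin p → ℝ) (t : Fin p → ℝ) : ℝ :=
  Real.sqrt |(Matrix.of (h t)).det|

/-- First jet `x^i_α = ∂x^i/∂t^α` of a map `x : ℝ^p → ℝ^n`. -/
def jet {p n : ℕ} (x : (Fin p → ℝ) → Fin n → ℝ) (t : Fin p → ℝ) :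
    Fin n → Fin p → ℝ :=
  fun i α => pd α (fun s => x s i) t

/-- Christoffel symbols `G^i_{jk} = ½ g^{il}(∂g_{lj}/∂x^k + ∂g_{lk}/∂x^j − ∂g_{jk}/∂x^l)`. -/
def christoffel {m : ℕ} (g : (Fin m → ℝ) → Fin m → Fin m → ℝ)
    (i j k : Fin m) (q : Fin m → ℝ) : ℝ :=
  (1 / 2) * ∑ l, minv (g q) i l *
    (pd k (fun y => g y l j) q + pd j (fun y => g y l k) q - pd l (fun y => g y j k) q)

/-- Covariant second jet
`x^i_{αβ} = ∂²x^i/∂t^α∂t^β − H^γ_{αβ} x^i_γ + G^i_{jk} x^j_α x^k_β`. -/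
def covHess {p n : ℕ} (h : (Fin p → ℝ) → Fin p → Fin p → ℝ)
    (g : (Fin n → ℝ) → Fin n → Fin n → ℝ)
    (x : (Fin p → ℝ) → Fin n → ℝ) (i : Fin n) (α β : Fin p) (t : Fin p → ℝ) : ℝ :=
  pd α (fun s => jet x s i β) t
    - (∑ γ, christoffel h γ α β t * jet x t i γ)
    + ∑ j, ∑ k, christoffel g i j k (x t) * jet x t j α * jet x t k β

/-- `∇_j X^i_α = ∂X^i_α/∂x^j + G^i_{jk} X^k_α`. -/
def nablaX {p n : ℕ} (g : (Fin n → ℝ) → Fin n → Fin n → ℝ)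
    (X : Fin n → Fin p → (Fin p → ℝ) → (Fin n → ℝ) → ℝ)
    (j i : Fin n) (α : Fin p) (t : Fin p → ℝ) (q : Fin n → ℝ) : ℝ :=
  pd j (fun y => X i α t y) q + ∑ k, christoffel g i j k q * X k α t q

/-- `D_β X^i_α = ∂X^i_α/∂t^β − H^γ_{βα} X^i_γ`. -/
def Dt {p n : ℕ} (h : (Fin p → ℝ) → Fin p → Fin p → ℝ)
    (X : Fin n → Fin p → (Fin p → ℝ) → (Fin n → ℝ) → ℝ)
    (β : Fin p) (i : Fin n) (α : Fin p) (t : Fin p → ℝ) (q : Fin n → ℝ) : ℝ :=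
  pd β (fun s => X i α s q) t - ∑ γ, christoffel h γ β α t * X i γ t q

/-- External tensor `F_j{}^i{}_α = ∇_j X^i_α − g_{hj} g^{ik} ∇_k X^h_α`. -/
def Fext {p n : ℕ} (g : (Fin n → ℝ) → Fin n → Fin n → ℝ)
    (X : Fin n → Fin p → (Fin p → ℝ) → (Fin n → ℝ) → ℝ)
    (j i : Fin n) (α : Fin p) (t : Fin p → ℝ) (q : Fin n → ℝ) : ℝ :=
  nablaX g X j i α t q
    - ∑ h', ∑ k, g q h' j * minv (g q) i k * nablaX g X k h' α t q

/-- Potential energy `f = ½ h^{αβ} g_{ij} X^i_α X^j_β`. -/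
def potE {p n : ℕ} (h : (Fin p → ℝ) → Fin p → Fin p → ℝ)
    (g : (Fin n → ℝ) → Fin n → Fin n → ℝ)
    (X : Fin n → Fin p → (Fin p → ℝ) → (Fin n → ℝ) → ℝ)
    (t : Fin p → ℝ) (q : Fin n → ℝ) : ℝ :=
  (1 / 2) * ∑ α, ∑ β, ∑ i, ∑ j, minv (h t) α β * g q i j * X i α t q * X j β t q

/-- A map `x` is an extremal of the first-order Lagrangian `L = L(t, x, x_·)` iff it
satisfies the Euler–Lagrange equations
`∂L/∂x^k − (d/dt^α)(∂L/∂x^k_α) = 0` along the first jet of `x`. -/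
def IsExtremal {p n : ℕ}
    (L : (Fin p → ℝ) → (Fin n → ℝ) → (Fin n → Fin p → ℝ) → ℝ)
    (x : (Fin p → ℝ) → Fin n → ℝ) : Prop :=
  ∀ (t : Fin p → ℝ) (k : Fin n),
    fderiv ℝ (fun q => L t q (jet x t)) (x t) (Pi.single k 1)
      - (∑ α, pd α
          (fun s => fderiv ℝ (fun v => L s (x s) v) (jet x s)
            (Pi.single k (Pi.single α 1))) t) = 0

section ChainRule

lemma fderiv_comp_graph {𝕜 E F G : Type*} [NontriviallyNormedField 𝕜]
    [NormedAddCommGroup E] [NormedSpace 𝕜 E] [NormedAddCommGroup F] [NormedSpace 𝕜 F]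
    [NormedAddCommGroup G] [NormedSpace 𝕜 G] {f : E → F → G} {x : E → F} {t : E}
    (hf : DifferentiableAt 𝕜 (fun z : E × F => f z.1 z.2) (t, x t))
    (hx : DifferentiableAt 𝕜 x t) :
    fderiv 𝕜 (fun s => f s (x s)) t
      = fderiv 𝕜 (fun s => f s (x t)) t + (fderiv 𝕜 (f t) (x t)).comp (fderiv 𝕜 x t) := by
  have hf' := hf.hasFDerivAt
  have hgraph : HasFDerivAt (fun s => f s (x s)) _ t :=
    hf'.comp (f := fun s => (s, x s)) t ((hasFDerivAt_id t).prodMk hx.hasFDerivAt)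
  have hfst : HasFDerivAt (fun s => f s (x t)) _ t :=
    hf'.comp (f := fun s => (s, x t)) t (hasFDerivAt_prodMk_left t (x t))
  have hsnd : HasFDerivAt (f t) _ (x t) :=
    hf'.comp (x t) (hasFDerivAt_prodMk_right t (x t))
  rw [hgraph.fderiv, hfst.fderiv, hsnd.fderiv]
  ext v
  simp [← map_add]

lemma fderiv_apply_eq_sum_pd {m : ℕ} (f : (Fin m → ℝ) → ℝ) (q v : Fin m → ℝ) :
    fderiv ℝ f q v = ∑ j, pd j f q * v j := by
  conv_lhs => rw [← (Pi.basisFun ℝ (Fin m)).sum_repr v]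
  simp [pd, mul_comm]

variable {p n : ℕ} {x : (Fin p → ℝ) → Fin n → ℝ} {t : Fin p → ℝ}

lemma fderiv_single_eq_jet (hx : DifferentiableAt ℝ x t) (j : Fin n) (α : Fin p) :
    fderiv ℝ x t (Pi.single α 1) j = jet x t j α := by
  rw [jet, pd, fderiv_apply hx]
  rfl

lemma pd_comp_graph {f : (Fin p → ℝ) → (Fin n → ℝ) → ℝ}
    (hf : DifferentiableAt ℝ (fun z : (Fin p → ℝ) × (Fin n → ℝ) => f z.1 z.2) (t, x t))
    (hx : DifferentiableAt ℝ x t) (α : Fin p) :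
    pd α (fun s => f s (x s)) t
      = pd α (fun s => f s (x t)) t + ∑ j, pd j (f t) (x t) * jet x t j α := by
  rw [pd, fderiv_comp_graph hf hx, add_apply, ContinuousLinearMap.comp_apply,
    fderiv_apply_eq_sum_pd (f t)]
  simp only [fderiv_single_eq_jet hx, pd]

end ChainRule

section Prolongation

open scoped Topology

variable {p n : ℕ}

lemma minv_comm {m : ℕ} {A : Fin m → Fin m → ℝ} (hA : ∀ i j, A i j = A j i) (i j : Fin m) :
    minv A i j = minv A j i :=
  (Matrix.IsSymm.ext fun a b => hA b a : (Matrix.of A).IsSymm).inv.apply j i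

lemma covHess_eq_Dt_add_nablaX (h : (Fin p → ℝ) → Fin p → Fin p → ℝ)
    (g : (Fin n → ℝ) → Fin n → Fin n → ℝ)
    {X : Fin n → Fin p → (Fin p → ℝ) → (Fin n → ℝ) → ℝ} {x : (Fin p → ℝ) → Fin n → ℝ}
    {t : Fin p → ℝ} {i : Fin n} {β : Fin p}
    (hX : DifferentiableAt ℝ (fun z : (Fin p → ℝ) × (Fin n → ℝ) => X i β z.1 z.2) (t, x t))
    (hx : DifferentiableAt ℝ x t)
    (hsol : ∀ᶠ s in 𝓝 t, ∀ i α, jet x s i α = X i α s (x s)) (α : Fin p) :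
    covHess h g x i α β t
      = Dt h X α i β t (x t) + ∑ j, nablaX g X j i β t (x t) * X j α t (x t) := by
  have hjet : ∀ i α, jet x t i α = X i α t (x t) := hsol.self_of_nhds
  have hsecond : pd α (fun s => jet x s i β) t
      = pd α (fun s => X i β s (x t)) t + ∑ j, pd j (X i β t) (x t) * X j α t (x t) := by
    have hgerm : (fun s => jet x s i β) =ᶠ[𝓝 t] fun s => X i β s (x s) :=
      hsol.mono fun s hs => hs i β
    simpa only [hjet, pd, hgerm.fderiv_eq] using pd_comp_graph hX hx α
  have hchristoffel : ∑ j, ∑ k, christoffel g i j k (x t) * X j α t (x t) * X k β t (x t)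
      = ∑ j, (∑ k, christoffel g i j k (x t) * X k β t (x t)) * X j α t (x t) := by
    simp only [Finset.sum_mul, mul_right_comm]
  simp only [covHess, Dt, nablaX, hjet, hsecond, hchristoffel, add_mul, Finset.sum_add_distrib]
  ring

lemma sum_Fext_mul (g : (Fin n → ℝ) → Fin n → Fin n → ℝ)
    (X : Fin n → Fin p → (Fin p → ℝ) → (Fin n → ℝ) → ℝ) (i : Fin n) (α : Fin p)
    (t : Fin p → ℝ) (q v : Fin n → ℝ) :
    ∑ j, Fext g X j i α t q * v j
      = ∑ j, nablaX g X j i α t q * v j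
        - ∑ h', ∑ k, ∑ j, minv (g q) i h' * g q k j * nablaX g X h' k α t q * v j := by
  simp only [Fext, sub_mul, Finset.sum_sub_distrib, Finset.sum_mul]
  congr 1
  rw [Finset.sum_comm_cycle]
  refine Finset.sum_congr rfl fun h' _ => ?_
  rw [Finset.sum_comm]
  simp only [mul_comm (g q _ _)]

lemma sum_metric_nablaX_add_sum_Fext (H : Fin p → Fin p → ℝ)
    (g : (Fin n → ℝ) → Fin n → Fin n → ℝ)
    (X : Fin n → Fin p → (Fin p → ℝ) → (Fin n → ℝ) → ℝ) (i : Fin n)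
    (t : Fin p → ℝ) (q : Fin n → ℝ) (v : Fin n → Fin p → ℝ) :
    (∑ h', ∑ α, ∑ β, ∑ k, ∑ j,
        minv (g q) i h' * H α β * g q k j * nablaX g X h' k α t q * v j β)
      + (∑ α, ∑ β, ∑ j, H α β * Fext g X j i α t q * v j β)
      = ∑ α, ∑ β, H α β * ∑ j, nablaX g X j i α t q * v j β := by
  have hmetric : ∑ h', ∑ α, ∑ β, ∑ k, ∑ j,
        minv (g q) i h' * H α β * g q k j * nablaX g X h' k α t q * v j β
      = ∑ α, ∑ β, H α β * ∑ h', ∑ k, ∑ j,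
        minv (g q) i h' * g q k j * nablaX g X h' k α t q * v j β := by
    rw [← Finset.sum_comm_cycle]
    simp only [Finset.mul_sum, mul_assoc, mul_left_comm (H _ _)]
  simp only [hmetric, mul_assoc (H _ _), ← Finset.mul_sum, sum_Fext_mul, mul_sub,
    Finset.sum_sub_distrib]
  ring

theorem poisson_system_prolongation_general
    {h : (Fin p → ℝ) → Fin p → Fin p → ℝ} {g : (Fin n → ℝ) → Fin n → Fin n → ℝ}
    {X : Fin n → Fin p → (Fin p → ℝ) → (Fin n → ℝ) → ℝ} {x : (Fin p → ℝ) → Fin n → ℝ}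
    {t : Fin p → ℝ}
    (hsymm : ∀ α β, h t α β = h t β α)
    (_hdiff : ∀ α β, DifferentiableAt ℝ (fun s => h s α β) t)
    (_hdet : (Matrix.of (h t)).det ≠ 0)
    (_gdiff : ∀ i j, DifferentiableAt ℝ (fun q => g q i j) (x t))
    (_gdet : (Matrix.of (g (x t))).det ≠ 0)
    (Xdiff : ∀ i α,
      DifferentiableAt ℝ (fun z : (Fin p → ℝ) × (Fin n → ℝ) => X i α z.1 z.2) (t, x t))
    (hx : ∀ᶠ s in 𝓝 t, DifferentiableAt ℝ x s)
    (hsol : ∀ᶠ s in 𝓝 t, ∀ i α, jet x s i α = X i α s (x s)) (i : Fin n) :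
    ∑ α, ∑ β, minv (h t) α β * covHess h g x i α β t
      = (∑ h', ∑ α, ∑ β, ∑ k, ∑ j, minv (g (x t)) i h' * minv (h t) α β
          * g (x t) k j * nablaX g X h' k α t (x t) * X j β t (x t))
        + (∑ α, ∑ β, ∑ j, minv (h t) α β * Fext g X j i α t (x t) * jet x t j β)
        + (∑ α, ∑ β, minv (h t) α β * Dt h X β i α t (x t)) := by
  have hjet : ∀ i α, jet x t i α = X i α t (x t) := hsol.self_of_nhds
  calc ∑ α, ∑ β, minv (h t) α β * covHess h g x i α β t
      = ∑ α, ∑ β, minv (h t) α β * covHess h g x i β α t := by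
        rw [Finset.sum_comm]
        simp only [minv_comm hsymm]
    _ = (∑ α, ∑ β, minv (h t) α β * ∑ j, nablaX g X j i α t (x t) * X j β t (x t))
        + ∑ α, ∑ β, minv (h t) α β * Dt h X β i α t (x t) := by
        simp only [covHess_eq_Dt_add_nablaX h g (Xdiff i _) hx.self_of_nhds hsol, mul_add,
          Finset.sum_add_distrib, add_comm]
    _ = _ := by
        simp only [hjet, sum_metric_nablaX_add_sum_Fext]

end Prolongation

/-- the generalized Poisson system (11) is a prolongation of the
first-order system (8). -/
theorem poisson_system_prolongation
    {p n : ℕ} (hp : 0 < p) (hn : 0 < n)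
    (h : (Fin p → ℝ) → Fin p → Fin p → ℝ)
    (hsymm : ∀ t α β, h t α β = h t β α)
    (hsmooth : ∀ α β, ContDiff ℝ (⊤ : ℕ∞) fun t => h t α β)
    (hdet : ∀ t, (Matrix.of (h t)).det ≠ 0)
    (g : (Fin n → ℝ) → Fin n → Fin n → ℝ)
    (gsymm : ∀ q i j, g q i j = g q j i)
    (gsmooth : ∀ i j, ContDiff ℝ (⊤ : ℕ∞) fun q => g q i j)
    (gdet : ∀ q, (Matrix.of (g q)).det ≠ 0)
    (X : Fin n → Fin p → (Fin p → ℝ) → (Fin n → ℝ) → ℝ)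
    (Xsmooth : ∀ i α, ContDiff ℝ (⊤ : ℕ∞) fun z : (Fin p → ℝ) × (Fin n → ℝ) => X i α z.1 z.2)
    (x : (Fin p → ℝ) → Fin n → ℝ) (hx : ContDiff ℝ (⊤ : ℕ∞) x)
    (hsol : ∀ (t : Fin p → ℝ) (i : Fin n) (α : Fin p), jet x t i α = X i α t (x t)) :
    ∀ (t : Fin p → ℝ) (i : Fin n),
      ∑ α, ∑ β, minv (h t) α β * covHess h g x i α β t
        = (∑ h', ∑ α, ∑ β, ∑ k, ∑ j, minv (g (x t)) i h' * minv (h t) α β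
            * g (x t) k j * nablaX g X h' k α t (x t) * X j β t (x t))
          + (∑ α, ∑ β, ∑ j, minv (h t) α β * Fext g X j i α t (x t) * jet x t j β)
          + (∑ α, ∑ β, minv (h t) α β * Dt h X β i α t (x t)) :=
  fun t => poisson_system_prolongation_general (hsymm t)
    (fun α β => (hsmooth α β).contDiffAt.differentiableAt (by simp)) (hdet t)
    (fun i j => (gsmooth i j).contDiffAt.differentiableAt (by simp)) (gdet (x t))
    (fun i α => (Xsmooth i α).contDiffAt.differentiableAt (by simp))
    (.of_forall (hx.differentiable (by simp))) (.of_forall hsol)
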